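/- Let (τ^t)_{t∈ℝ} be a family of linear maps 𝒜 → 𝒜 with ‖τ^t(x)‖ ≤ ‖x‖ for all x, t, and suppose there are constants C₁ ≥ 0, v > 0, ν ∈ ℕ such that for all t ∈ ℝ, all integers M ≤ N, and all B ∈ 𝒜 with E_M(B) = B: ‖τ^t(B) − E_N(τ^t(B))‖ ≤ C₁·(2M+1)^ν·e^{v|t| − (N−M)}·‖B‖. Let f, f₁ : (0,∞) → (0,∞) be continuous decreasing with limit 0 at infinity, and set K₁ := sup_{N∈ℕ} f(N−⌊N/2⌋)/f₁(N) and K₂ := sup_{N∈ℕ} (2N+1)^ν·e^{−⌊N/2⌋/2 + 1/2}/f₁(N); assume K₁ < ∞ and K₂ < ∞. Then for every t ∈ ℝ and every A ∈ D_f, τ^t(A) ∈ D_{f₁} and ‖τ^t(A)‖_{f₁} ≤ ( 1 + max{ 2K₁ + C₁K₂ , (2/f₁(4v|t|))·𝟙[4v|t| ≥ 1] } ) · ‖A‖_f. -/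

import Mathlib

open Filter

variable {𝒜 : Type*}

/-- The quasi-locality norm `‖A‖_f = ‖A‖ + sup_{N ≥ 1} ‖A - E_N(A)‖ / f(N)`
(as a real number; the supremum is the real `sSup` of the corresponding set). -/
noncomputable def fnorm [NormedRing 𝒜] [NormedAlgebra ℂ 𝒜]
    (E : ℕ → 𝒜 →ₗ[ℂ] 𝒜) (f : ℝ → ℝ) (A : 𝒜) : ℝ :=
  ‖A‖ + sSup {r : ℝ | ∃ N : ℕ, 1 ≤ N ∧ r = ‖A - E N A‖ / f N}

/-- `A ∈ D_f` iff `‖A‖_f < ∞`, i.e. the family `‖A - E_N(A)‖ / f(N)` is bounded above. -/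
def memDf [NormedRing 𝒜] [NormedAlgebra ℂ 𝒜]
    (E : ℕ → 𝒜 →ₗ[ℂ] 𝒜) (f : ℝ → ℝ) (A : 𝒜) : Prop :=
  BddAbove {r : ℝ | ∃ N : ℕ, 1 ≤ N ∧ r = ‖A - E N A‖ / f N}

/-!
Split `A = E_M A + (A - E_M A)` at the scale `M = N - ⌊N/2⌋`. Since `τ^t` and `E_N` are
contractions, the tail `A - E_M A` costs at most `2 ‖A - E_M A‖ ≤ 2 ‖A‖_f f(M)`, which `K₁` compares
with `f₁(N)`. The localized part `E_M A` is controlled by the light-cone estimate at distance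
`N - M = ⌊N/2⌋`: when `v|t| ≤ N/4`, the growth `e^{v|t|}` uses up, up to a constant factor, at most
half of the decay `e^{-⌊N/2⌋}`, and `K₂` compares the remaining half with `f₁(N)`. When
`1 ≤ N ≤ 4v|t|`, the trivial bound `2 ‖A‖` is enough because `f₁(N) ≥ f₁(4v|t|)`.
-/

section Ratios

/-- The quotients `u N / g N` over `N ≥ 1`. If `g > 0` and they are bounded above, their supremum is
the best constant `K` in `u ≤ K g`. The suprema in `‖·‖_f`, `K₁` and `K₂` are over such sets. -/
def ratios (u g : ℕ → ℝ) : Set ℝ :=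
  {r : ℝ | ∃ N : ℕ, 1 ≤ N ∧ r = u N / g N}

variable {u g : ℕ → ℝ}

lemma le_sSup_ratios_mul (h : BddAbove (ratios u g)) {N : ℕ} (hN : 1 ≤ N) (hg : 0 < g N) :
    u N ≤ sSup (ratios u g) * g N :=
  (div_le_iff₀ hg).mp (le_csSup h ⟨N, hN, rfl⟩)

lemma mem_upperBounds_ratios {c : ℝ} (hg : ∀ N, 1 ≤ N → 0 < g N)
    (h : ∀ N, 1 ≤ N → u N ≤ c * g N) : c ∈ upperBounds (ratios u g) := by
  rintro _ ⟨N, hN, rfl⟩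
  exact (div_le_iff₀ (hg N hN)).mpr (h N hN)

lemma ratios_nonempty : (ratios u g).Nonempty :=
  ⟨_, 1, le_rfl, rfl⟩

lemma sSup_ratios_nonneg (hu : ∀ N, 1 ≤ N → 0 ≤ u N) (hg : ∀ N, 1 ≤ N → 0 ≤ g N) :
    0 ≤ sSup (ratios u g) := by
  refine Real.sSup_nonneg ?_
  rintro _ ⟨N, hN, rfl⟩
  exact div_nonneg (hu N hN) (hg N hN)

end Ratios

section QuasiLocalNorm

variable [NormedRing 𝒜] [NormedAlgebra ℂ 𝒜] {E : ℕ → 𝒜 →ₗ[ℂ] 𝒜} {f : ℝ → ℝ} {A : 𝒜}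

lemma norm_le_fnorm (hf : ∀ t, 0 < t → 0 < f t) : ‖A‖ ≤ fnorm E f A :=
  le_add_of_nonneg_right <| sSup_ratios_nonneg (u := fun N ↦ ‖A - E N A‖) (g := fun N ↦ f N)
    (fun _ _ ↦ norm_nonneg _) (fun _ hN ↦ (hf _ (Nat.cast_pos.mpr hN)).le)

lemma norm_sub_le_fnorm_mul (hA : memDf E f A) {N : ℕ} (hN : 1 ≤ N) (hf : 0 < f N) :
    ‖A - E N A‖ ≤ fnorm E f A * f N :=
  calc ‖A - E N A‖ ≤ sSup (ratios (fun N ↦ ‖A - E N A‖) (fun N ↦ f N)) * f N :=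
        le_sSup_ratios_mul (g := fun N ↦ f N) hA hN hf
    _ ≤ fnorm E f A * f N :=
        mul_le_mul_of_nonneg_right (le_add_of_nonneg_left (norm_nonneg A)) hf.le

lemma memDf_and_fnorm_le {c : ℝ} (hf : ∀ t, 0 < t → 0 < f t)
    (h : ∀ N : ℕ, 1 ≤ N → ‖A - E N A‖ ≤ c * f N) :
    memDf E f A ∧ fnorm E f A ≤ ‖A‖ + c := by
  have hc : c ∈ upperBounds (ratios (fun N ↦ ‖A - E N A‖) (fun N ↦ f N)) :=
    mem_upperBounds_ratios (fun _ hN ↦ hf _ (Nat.cast_pos.mpr hN)) h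
  exact ⟨⟨c, hc⟩, add_le_add_right (csSup_le ratios_nonempty hc) ‖A‖⟩

end QuasiLocalNorm

section LiebRobinson

variable {R V : Type*} [Semiring R] [SeminormedAddCommGroup V] [Module R V]

/-- A Lieb–Robinson bound for a map `T` relative to the localization maps `E`: if `B` is localized
at scale `M`, then `T B` is localized at scale `N ≥ M` up to an error decaying exponentially beyond
the light cone `N - M = a`. For the dynamics `τ^t` one takes `a = v|t|`; the weight `w` allows for
growth in the size of the support. -/
def HasLiebRobinsonBound (E : ℕ → V →ₗ[R] V) (T : V →ₗ[R] V) (C a : ℝ) (w : ℕ → ℝ) : Prop :=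
  ∀ M N : ℕ, M ≤ N → ∀ B : V, E M B = B →
    ‖T B - E N (T B)‖ ≤ C * w M * Real.exp (a - ((N : ℝ) - (M : ℝ))) * ‖B‖

lemma norm_sub_map_le_two_mul_norm {P T : V → V} (hP : ∀ x, ‖P x‖ ≤ ‖x‖)
    (hT : ∀ x, ‖T x‖ ≤ ‖x‖) (x : V) : ‖T x - P (T x)‖ ≤ 2 * ‖x‖ := by
  linarith [norm_sub_le (T x) (P (T x)), hP (T x), hT x]

lemma norm_sub_map_le_add {P T : V →ₗ[R] V} (hP : ∀ x, ‖P x‖ ≤ ‖x‖) (hT : ∀ x, ‖T x‖ ≤ ‖x‖)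
    (x y : V) : ‖T x - P (T x)‖ ≤ 2 * ‖x - y‖ + ‖T y - P (T y)‖ :=
  calc ‖T x - P (T x)‖ = ‖(T (x - y) - P (T (x - y))) + (T y - P (T y))‖ := by
        simp only [map_sub]; abel_nf
    _ ≤ 2 * ‖x - y‖ + ‖T y - P (T y)‖ := (norm_add_le _ _).trans <|
        add_le_add_left (norm_sub_map_le_two_mul_norm hP hT (x - y)) _

lemma norm_sub_map_le_two_div_mul {P T : V → V} (hP : ∀ x, ‖P x‖ ≤ ‖x‖)
    (hT : ∀ x, ‖T x‖ ≤ ‖x‖) {r s : ℝ} (hr : 0 < r) (hrs : r ≤ s) (x : V) :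
    ‖T x - P (T x)‖ ≤ 2 / r * ‖x‖ * s :=
  calc ‖T x - P (T x)‖ ≤ 2 * ‖x‖ := norm_sub_map_le_two_mul_norm hP hT x
    _ ≤ 2 * ‖x‖ * (s / r) := le_mul_of_one_le_right (by positivity) ((one_le_div hr).mpr hrs)
    _ = 2 / r * ‖x‖ * s := by ring

lemma lightCone_exponent_le {a : ℝ} {N : ℕ} (haN : 4 * a ≤ N) :
    a - ((N : ℝ) - ((N - N / 2 : ℕ) : ℝ)) ≤ -((N / 2 : ℕ) : ℝ) / 2 + 1 / 2 := by
  have hN : (N : ℝ) ≤ 2 * ((N / 2 : ℕ) : ℝ) + 1 := by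
    exact_mod_cast (by lia : N ≤ 2 * (N / 2) + 1)
  rw [Nat.cast_sub (Nat.div_le_self N 2)]
  linarith

lemma HasLiebRobinsonBound.norm_sub_map_le {E : ℕ → V →ₗ[R] V} {T : V →ₗ[R] V} {C a : ℝ}
    {w : ℕ → ℝ} (h : HasLiebRobinsonBound E T C a w) (hE : ∀ N x, ‖E N x‖ ≤ ‖x‖)
    (hE_idem : ∀ N x, E N (E N x) = E N x) (hT : ∀ x, ‖T x‖ ≤ ‖x‖) (hC : 0 ≤ C)
    (hw : Monotone w) (hw_nonneg : ∀ N, 0 ≤ w N) {N : ℕ} (haN : 4 * a ≤ N) (x : V) :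
    ‖T x - E N (T x)‖ ≤ 2 * ‖x - E (N - N / 2) x‖ +
      C * (w N * Real.exp (-((N / 2 : ℕ) : ℝ) / 2 + 1 / 2)) * ‖x‖ := by
  have hMN : N - N / 2 ≤ N := Nat.sub_le _ _
  have localized : ‖T (E (N - N / 2) x) - E N (T (E (N - N / 2) x))‖ ≤
      C * (w N * Real.exp (-((N / 2 : ℕ) : ℝ) / 2 + 1 / 2)) * ‖x‖ := by
    refine (h _ N hMN _ (hE_idem _ x)).trans ?_
    rw [mul_assoc C]
    have := hw_nonneg N
    gcongr
    · exact hw hMN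
    · exact lightCone_exponent_le haN
    · exact hE _ x
  exact (norm_sub_map_le_add (hE N) hT x _).trans (add_le_add_right localized _)

end LiebRobinson

section LightCone

variable [NormedRing 𝒜] [NormedAlgebra ℂ 𝒜] {E : ℕ → 𝒜 →ₗ[ℂ] 𝒜} {T : 𝒜 →ₗ[ℂ] 𝒜}
  {C a : ℝ} {w : ℕ → ℝ} {f f₁ : ℝ → ℝ} {A : 𝒜}

lemma HasLiebRobinsonBound.norm_sub_map_le_fnorm_mul (hLR : HasLiebRobinsonBound E T C a w)
    (hE : ∀ N x, ‖E N x‖ ≤ ‖x‖) (hE_idem : ∀ N x, E N (E N x) = E N x)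
    (hT : ∀ x, ‖T x‖ ≤ ‖x‖) (hC : 0 ≤ C) (hw : Monotone w) (hw_nonneg : ∀ N, 0 ≤ w N)
    (hf : ∀ t, 0 < t → 0 < f t) (hA : memDf E f A)
    {N : ℕ} (hN : 1 ≤ N) (haN : 4 * a ≤ N)
    {K₁ K₂ : ℝ} (hK₁ : f ((N : ℝ) - ((N / 2 : ℕ) : ℝ)) ≤ K₁ * f₁ N)
    (hK₂ : w N * Real.exp (-((N / 2 : ℕ) : ℝ) / 2 + 1 / 2) ≤ K₂ * f₁ N) :
    ‖T A - E N (T A)‖ ≤ (2 * K₁ + C * K₂) * fnorm E f A * f₁ N := by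
  have hAF : ‖A‖ ≤ fnorm E f A := norm_le_fnorm hf
  have hF : 0 ≤ fnorm E f A := (norm_nonneg A).trans hAF
  have tail : ‖A - E (N - N / 2) A‖ ≤ fnorm E f A * (K₁ * f₁ N) := by
    have hM : 1 ≤ N - N / 2 := by lia
    refine (norm_sub_le_fnorm_mul hA hM (hf _ (Nat.cast_pos.mpr hM))).trans ?_
    rw [Nat.cast_sub (Nat.div_le_self N 2)]
    exact mul_le_mul_of_nonneg_left hK₁ hF
  have localized : C * (w N * Real.exp (-((N / 2 : ℕ) : ℝ) / 2 + 1 / 2)) * ‖A‖ ≤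
      C * (K₂ * f₁ N) * fnorm E f A := by
    have := hw_nonneg N
    exact mul_le_mul (mul_le_mul_of_nonneg_left hK₂ hC) hAF (norm_nonneg A)
      (mul_nonneg hC (le_trans (by positivity) hK₂))
  calc ‖T A - E N (T A)‖
      ≤ 2 * ‖A - E (N - N / 2) A‖ +
          C * (w N * Real.exp (-((N / 2 : ℕ) : ℝ) / 2 + 1 / 2)) * ‖A‖ :=
        hLR.norm_sub_map_le hE hE_idem hT hC hw hw_nonneg haN A
    _ ≤ 2 * (fnorm E f A * (K₁ * f₁ N)) + C * (K₂ * f₁ N) * fnorm E f A := by gcongr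
    _ = (2 * K₁ + C * K₂) * fnorm E f A * f₁ N := by ring

theorem stmt_14_general (hE : ∀ N x, ‖E N x‖ ≤ ‖x‖) (hE_idem : ∀ N x, E N (E N x) = E N x)
    (hT : ∀ x, ‖T x‖ ≤ ‖x‖) (hC : 0 ≤ C) (hw : Monotone w) (hw_nonneg : ∀ N, 0 ≤ w N)
    (hLR : HasLiebRobinsonBound E T C a w) (hf : ∀ t, 0 < t → 0 < f t)
    (hf₁_anti : AntitoneOn f₁ (Set.Ioi 0)) (hf₁ : ∀ t, 0 < t → 0 < f₁ t)
    (hK₁ : BddAbove (ratios (fun N ↦ f ((N : ℝ) - ((N / 2 : ℕ) : ℝ))) (fun N ↦ f₁ N)))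
    (hK₂ : BddAbove (ratios (fun N ↦ w N * Real.exp (-((N / 2 : ℕ) : ℝ) / 2 + 1 / 2))
      (fun N ↦ f₁ N)))
    (hA : memDf E f A) :
    memDf E f₁ (T A) ∧ fnorm E f₁ (T A) ≤
      (1 + max
        (2 * sSup (ratios (fun N ↦ f ((N : ℝ) - ((N / 2 : ℕ) : ℝ))) (fun N ↦ f₁ N)) +
          C * sSup (ratios (fun N ↦ w N * Real.exp (-((N / 2 : ℕ) : ℝ) / 2 + 1 / 2))
            (fun N ↦ f₁ N)))
        ((2 / f₁ (4 * a)) * (if 1 ≤ 4 * a then (1 : ℝ) else 0))) * fnorm E f A := by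
  set m : ℝ := max _ _
  have hAF : ‖A‖ ≤ fnorm E f A := norm_le_fnorm hf
  have hF : 0 ≤ fnorm E f A := (norm_nonneg A).trans hAF
  have key (N : ℕ) (hN : 1 ≤ N) : ‖T A - E N (T A)‖ ≤ m * fnorm E f A * f₁ N := by
    have hN₀ : (0 : ℝ) < N := Nat.cast_pos.mpr hN
    have hf₁N : 0 < f₁ N := hf₁ N hN₀
    rcases le_total (N : ℝ) (4 * a) with inside | outside
    · have hpos : 0 < 4 * a := hN₀.trans_le inside
      have hf₁a : 0 < f₁ (4 * a) := hf₁ _ hpos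
      have hm : 2 / f₁ (4 * a) ≤ m := by
        have h : 2 / f₁ (4 * a) * (if 1 ≤ 4 * a then (1 : ℝ) else 0) ≤ m := le_max_right _ _
        rwa [if_pos ((Nat.one_le_cast.mpr hN).trans inside), mul_one] at h
      calc ‖T A - E N (T A)‖ ≤ 2 / f₁ (4 * a) * ‖A‖ * f₁ N :=
            norm_sub_map_le_two_div_mul (hE N) hT hf₁a (hf₁_anti hN₀ hpos inside) A
        _ ≤ 2 / f₁ (4 * a) * fnorm E f A * f₁ N := by gcongr
        _ ≤ m * fnorm E f A * f₁ N := by gcongr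
    · refine (hLR.norm_sub_map_le_fnorm_mul hE hE_idem hT hC hw hw_nonneg hf hA hN outside
        (le_sSup_ratios_mul hK₁ hN hf₁N) (le_sSup_ratios_mul hK₂ hN hf₁N)).trans ?_
      gcongr
      exact le_max_left _ _
  obtain ⟨hmem, hle⟩ := memDf_and_fnorm_le hf₁ key
  exact ⟨hmem, by linarith [hT A]⟩

end LightCone

theorem stmt_14 [NormedRing 𝒜] [StarRing 𝒜] [CStarRing 𝒜] [CompleteSpace 𝒜]
    [NormedAlgebra ℂ 𝒜] [StarModule ℂ 𝒜]
    (E : ℕ → 𝒜 →ₗ[ℂ] 𝒜)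
    (hE_norm : ∀ (N : ℕ) (x : 𝒜), ‖E N x‖ ≤ ‖x‖)
    (hE_star : ∀ (N : ℕ) (x : 𝒜), E N (star x) = star (E N x))
    (hE_comp : ∀ (N M : ℕ) (x : 𝒜), E N (E M x) = E (min N M) x)
    (hE_mul₁ : ∀ (N : ℕ) (x y : 𝒜), E N (E N x * y) = E N x * E N y)
    (hE_mul₂ : ∀ (N : ℕ) (x y : 𝒜), E N (x * E N y) = E N x * E N y)
    (τ : ℝ → 𝒜 →ₗ[ℂ] 𝒜) (hτ_contr : ∀ (t : ℝ) (x : 𝒜), ‖τ t x‖ ≤ ‖x‖)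
    (C₁ : ℝ) (hC₁ : 0 ≤ C₁) (v : ℝ) (hv : 0 < v) (ν : ℕ)
    (hτ_loc : ∀ (t : ℝ) (M N : ℕ), M ≤ N → ∀ B : 𝒜, E M B = B →
      ‖τ t B - E N (τ t B)‖ ≤
        C₁ * (2 * (M : ℝ) + 1) ^ ν * Real.exp (v * |t| - ((N : ℝ) - (M : ℝ))) * ‖B‖)
    (f f₁ : ℝ → ℝ)
    (hf_cont : ContinuousOn f (Set.Ioi 0))
    (hf_anti : AntitoneOn f (Set.Ioi 0)) (hf_pos : ∀ t : ℝ, 0 < t → 0 < f t)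
    (hf_lim : Tendsto f atTop (nhds 0))
    (hf₁_cont : ContinuousOn f₁ (Set.Ioi 0))
    (hf₁_anti : AntitoneOn f₁ (Set.Ioi 0)) (hf₁_pos : ∀ t : ℝ, 0 < t → 0 < f₁ t)
    (hf₁_lim : Tendsto f₁ atTop (nhds 0))
    (hK₁ : BddAbove {r : ℝ | ∃ N : ℕ, 1 ≤ N ∧
      r = f ((N : ℝ) - ((N / 2 : ℕ) : ℝ)) / f₁ N})
    (hK₂ : BddAbove {r : ℝ | ∃ N : ℕ, 1 ≤ N ∧
      r = (2 * (N : ℝ) + 1) ^ ν * Real.exp (-((N / 2 : ℕ) : ℝ) / 2 + 1 / 2) / f₁ N}) :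
    ∀ (t : ℝ) (A : 𝒜), memDf E f A → memDf E f₁ (τ t A) ∧
      fnorm E f₁ (τ t A) ≤
        (1 + max
          (2 * sSup {r : ℝ | ∃ N : ℕ, 1 ≤ N ∧
              r = f ((N : ℝ) - ((N / 2 : ℕ) : ℝ)) / f₁ N} +
            C₁ * sSup {r : ℝ | ∃ N : ℕ, 1 ≤ N ∧
              r = (2 * (N : ℝ) + 1) ^ ν * Real.exp (-((N / 2 : ℕ) : ℝ) / 2 + 1 / 2) / f₁ N})
          ((2 / f₁ (4 * v * |t|)) * (if 1 ≤ 4 * v * |t| then (1 : ℝ) else 0))) *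
          fnorm E f A := by
  intro t A hA
  rw [mul_assoc 4 v |t|]
  exact stmt_14_general hE_norm (fun N x ↦ by rw [hE_comp, min_self]) (hτ_contr t) hC₁
    (fun M N hMN ↦ by gcongr) (fun N ↦ by positivity) (hτ_loc t)
    hf_pos hf₁_anti hf₁_pos hK₁ hK₂ hA
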